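/- arXiv:2409.03922 — 4 statements merged into one kernel-verified Lean document; each statement's English description precedes it below -/
import Mathlib

section
/- Let R be a commutative ring, V and V' finite rank free R-modules, and λ, λ' ∈ R with λ − λ' a unit of R. Let A = ∑_{i≥0} A_i t^i ∈ (End_R V)[[t]] and A' = ∑_{i≥0} A'_i t^i ∈ (End_R V')[[t]] be power series of endomorphisms such that A_0 − λ·id_V is nilpotent and A'_0 − λ'·id_{V'} is nilpotent. If f = ∑_{i≥0} f_i t^i ∈ Hom_R(V, V')[[t]] satisfies the intertwining relation t^2·(df/dt) = f·A − A'·f in Hom_R(V, V')[[t]], then f = 0. -/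
/-!
The lowest nonzero coefficient `g` of `f` would satisfy `g ∘ A₀ = A'₀ ∘ g`, because `t² · df/dt`
contributes to the equation in degree `r` only through the coefficient of degree `r - 1`. Such a
`g` also intertwines `A₀ - λ'`, which is invertible, with `A'₀ - λ'`, which is nilpotent; taking a
large power of both gives `g = 0`.
-/

theorem isUnit_sub_smul_one_of_isNilpotent_sub_smul_one {R S : Type*} [CommRing R] [Ring S]
    [Algebra R S] {a : S} {r s : R} (hrs : IsUnit (r - s)) (ha : IsNilpotent (a - r • (1 : S))) :
    IsUnit (a - s • (1 : S)) := by
  have hunit : IsUnit (algebraMap R S (r - s)) := hrs.map _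
  have hshift : algebraMap R S (r - s) + (a - r • (1 : S)) = a - s • (1 : S) := by
    rw [Algebra.algebraMap_eq_smul_one, sub_smul]
    abel
  exact hshift ▸ ha.isUnit_add_left_of_commute hunit (Algebra.commutes _ _).symm

theorem eq_zero_of_comp_eq_comp_of_surjective_of_isNilpotent {R V V' : Type*} [Semiring R]
    [AddCommMonoid V] [Module R V] [AddCommMonoid V'] [Module R V']
    {N : Module.End R V} {N' : Module.End R V'} (hN : Function.Surjective N)
    (hN' : IsNilpotent N') {g : V →ₗ[R] V'} (hg : N' ∘ₗ g = g ∘ₗ N) : g = 0 := by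
  obtain ⟨k, hk⟩ := hN'
  have hpow : g ∘ₗ (N ^ k) = 0 := by
    rw [← Module.End.commute_pow_left_of_commute hg k, hk, LinearMap.zero_comp]
  have hsurj : Function.Surjective (N ^ k) := by
    rw [Module.End.coe_pow]
    exact hN.iterate k
  rwa [← LinearMap.zero_comp (N ^ k), LinearMap.cancel_right hsurj] at hpow

theorem eq_zero_of_comp_eq_comp_of_isNilpotent_sub_smul_one {R V V' : Type*} [CommRing R]
    [AddCommGroup V] [Module R V] [AddCommGroup V'] [Module R V'] {r r' : R}
    (hr : IsUnit (r - r')) {B : Module.End R V} {B' : Module.End R V'}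
    (hB : IsNilpotent (B - r • (1 : Module.End R V)))
    (hB' : IsNilpotent (B' - r' • (1 : Module.End R V')))
    {g : V →ₗ[R] V'} (hg : g ∘ₗ B = B' ∘ₗ g) : g = 0 := by
  have hsurj : Function.Surjective (B - r' • (1 : Module.End R V)) :=
    ((Module.End.isUnit_iff _).mp
      (isUnit_sub_smul_one_of_isNilpotent_sub_smul_one hr hB)).surjective
  refine eq_zero_of_comp_eq_comp_of_surjective_of_isNilpotent hsurj hB' ?_
  simp only [LinearMap.sub_comp, LinearMap.comp_sub, LinearMap.smul_comp, LinearMap.comp_smul,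
    Module.End.one_eq_id, LinearMap.id_comp, LinearMap.comp_id, hg]

theorem sum_range_comp_sub_comp_of_forall_lt_eq_zero {R V V' : Type*} [Semiring R]
    [AddCommMonoid V] [Module R V] [AddCommGroup V'] [Module R V']
    (A : ℕ → Module.End R V) (A' : ℕ → Module.End R V') {f : ℕ → (V →ₗ[R] V')} {n : ℕ}
    (hf : ∀ i < n, f i = 0) :
    ∑ i ∈ Finset.range (n + 1), (f i ∘ₗ A (n - i) - A' (n - i) ∘ₗ f i) =
      f n ∘ₗ A 0 - A' 0 ∘ₗ f n := by
  rw [Finset.sum_range_succ, Nat.sub_self, add_eq_right]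
  refine Finset.sum_eq_zero fun i hi => ?_
  rw [hf i (Finset.mem_range.mp hi), LinearMap.zero_comp, LinearMap.comp_zero, sub_zero]

theorem statement2_general {R : Type*} [CommRing R] {V V' : Type*}
    [AddCommGroup V] [Module R V] [AddCommGroup V'] [Module R V']
    (lam lam' : R) (hunit : IsUnit (lam - lam'))
    (A : ℕ → Module.End R V) (A' : ℕ → Module.End R V')
    (hA : IsNilpotent (A 0 - lam • (1 : Module.End R V)))
    (hA' : IsNilpotent (A' 0 - lam' • (1 : Module.End R V')))
    (f : ℕ → (V →ₗ[R] V'))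
    (hf : ∀ r : ℕ,
      (∑ i ∈ Finset.range (r + 1), ((f i) ∘ₗ (A (r - i)) - (A' (r - i)) ∘ₗ (f i)))
        = (r - 1) • f (r - 1)) :
    ∀ n, f n = 0 := by
  intro n
  induction n using Nat.strong_induction_on with
  | _ n ih =>
    have hderiv : (n - 1) • f (n - 1) = 0 := by
      rcases n with _ | m
      · exact zero_smul ℕ (f 0)
      · rw [Nat.add_sub_cancel, ih m m.lt_succ_self, smul_zero]
    have hlead : f n ∘ₗ A 0 - A' 0 ∘ₗ f n = 0 := by
      rw [← sum_range_comp_sub_comp_of_forall_lt_eq_zero A A' ih, hf n, hderiv]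
    exact eq_zero_of_comp_eq_comp_of_isNilpotent_sub_smul_one hunit hA hA' (sub_eq_zero.mp hlead)

/-- Lemma 2.2 of the paper. Let `R` be a commutative ring, `V, V'` finite rank
free `R`-modules, and `λ, λ' ∈ R` with `λ - λ'` a unit. Let `A = ∑ A_i t^i` and `A' = ∑ A'_i t^i`
be power series of endomorphisms (given by their coefficient sequences) with `A_0 - λ·id` and
`A'_0 - λ'·id` nilpotent. If `f = ∑ f_i t^i` satisfies `t²·(df/dt) = f·A - A'·f`, i.e.
coefficientwise `∑_{i+j=r} (f_i ∘ A_j - A'_j ∘ f_i) = (r-1)·f_{r-1}` for all `r` (with the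
convention that the right-hand side vanishes for `r = 0`), then `f = 0`. -/
theorem statement2 {R : Type*} [CommRing R] {V V' : Type*}
    [AddCommGroup V] [Module R V] [AddCommGroup V'] [Module R V']
    [Module.Free R V] [Module.Finite R V] [Module.Free R V'] [Module.Finite R V']
    (lam lam' : R) (hunit : IsUnit (lam - lam'))
    (A : ℕ → Module.End R V) (A' : ℕ → Module.End R V')
    (hA : IsNilpotent (A 0 - lam • (1 : Module.End R V)))
    (hA' : IsNilpotent (A' 0 - lam' • (1 : Module.End R V')))
    (f : ℕ → (V →ₗ[R] V'))
    (hf : ∀ r : ℕ,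
      (∑ i ∈ Finset.range (r + 1), ((f i) ∘ₗ (A (r - i)) - (A' (r - i)) ∘ₗ (f i)))
        = (r - 1) • f (r - 1)) :
    ∀ n, f n = 0 :=
  statement2_general lam lam' hunit A A' hA hA' f hf
end

section
/- Let k be a field of characteristic p > 0, V a finite-dimensional k-vector space, and A = ∑_{i≥0} A_i t^i ∈ (End_k V)[[t]]. Let ∇: V[[t]] → V[[t]] be the k-linear operator ∇ = t·d/dt + A (the connection along the derivation t·d/dt), and let ∇' : V[[t]] → V[[t]] be the operator x ↦ t·∇(x) (the connection along t^2·d/dt). Then (∇')^p = t^p · (∇^p − ∇) as k-linear operators on V[[t]]. -/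
section

variable {k : Type*} [Field k] {V : Type*} [AddCommGroup V] [Module k V]

/-- Multiplication by `t` on `V[[t]]`, modelled as the shift operator on `ℕ → V`. -/
def shiftOp (k : Type*) [Field k] (V : Type*) [AddCommGroup V] [Module k V] :
    Module.End k (ℕ → V) where
  toFun x n := match n with | 0 => 0 | (m + 1) => x m
  map_add' x y := by funext n; cases n <;> simp
  map_smul' c x := by funext n; cases n <;> simp

/-- The operator `t·d/dt` on `V[[t]] = ℕ → V`, i.e. `∑ vₙ tⁿ ↦ ∑ n·vₙ tⁿ`. -/
def eulerOp (k : Type*) [Field k] (V : Type*) [AddCommGroup V] [Module k V] :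
    Module.End k (ℕ → V) where
  toFun x n := n • x n
  map_add' x y := by funext n; simp
  map_smul' c x := by
    funext n
    simp only [Pi.smul_apply, RingHom.id_apply]
    exact smul_comm _ _ _

/-- The action on `V[[t]] = ℕ → V` of a power series of endomorphisms
`A = ∑ Aᵢ tⁱ ∈ (End V)[[t]]`, by convolution. -/
def seriesOp (A : ℕ → Module.End k V) : Module.End k (ℕ → V) where
  toFun x n := ∑ i ∈ Finset.range (n + 1), A i (x (n - i))
  map_add' x y := by funext n; simp [Finset.sum_add_distrib]
  map_smul' c x := by funext n; simp [Finset.smul_sum]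

/-!
Write `T` for multiplication by `t` and `N` for `∇`. The Leibniz rule reads `N T = T (N + 1)`, and
moving every `T` to the left gives `(T N)ⁿ = Tⁿ N (N + 1) ⋯ (N + n - 1)`. In characteristic `p`
the polynomial `X (X + 1) ⋯ (X + p - 1)` is `X ^ p - X`: over `𝔽_p` both are monic of degree `p`
and vanish at every element.
-/

section ShiftRelation

open Polynomial

variable {K R : Type*} [CommSemiring K] [Semiring R] [Algebra K R] {T N : R}

theorem semiconjBy_pow_add_natCast (h : SemiconjBy T (N + 1) N) (n : ℕ) :
    SemiconjBy (T ^ n) (N + n) N := by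
  induction n with
  | zero => simp
  | succ n ih =>
    have shift : SemiconjBy T (N + 1 + n) (N + n) := h.add_right (Nat.commute_cast T n)
    rw [pow_succ, Nat.cast_succ, add_comm (n : R), ← add_assoc]
    exact ih.mul_left shift

theorem mul_pow_eq_pow_mul_aeval_ascPochhammer (h : SemiconjBy T (N + 1) N) (n : ℕ) :
    (T * N) ^ n = T ^ n * aeval N (ascPochhammer K n) := by
  induction n with
  | zero => simp
  | succ n ih =>
    calc (T * N) ^ (n + 1)
        = T * (N * T ^ n) * aeval N (ascPochhammer K n) := by
          rw [pow_succ', ih]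
          simp only [mul_assoc]
      _ = T * (T ^ n * (N + n)) * aeval N (ascPochhammer K n) := by
          rw [(semiconjBy_pow_add_natCast h n).eq]
      _ = T ^ (n + 1) * aeval N (ascPochhammer K (n + 1)) := by
          rw [ascPochhammer_succ_right, mul_comm (ascPochhammer K n), pow_succ']
          simp only [map_mul, map_add, aeval_X, map_natCast, mul_assoc]

end ShiftRelation

section PrimeCharacteristic

open Polynomial

variable (p : ℕ) [Fact p.Prime]

theorem ascPochhammer_zmod_eval_eq_zero (x : ZMod p) : (ascPochhammer (ZMod p) p).eval x = 0 := by
  simpa using ascPochhammer_eval_neg_coe_nat_of_lt (R := ZMod p) (ZMod.val_lt (-x))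

theorem ascPochhammer_zmod_eq_X_pow_sub_X : ascPochhammer (ZMod p) p = X ^ p - X := by
  have one_lt : 1 < p := (Fact.out : p.Prime).one_lt
  have monic : (X ^ p - X : (ZMod p)[X]).Monic :=
    monic_X_pow_sub (degree_X.trans_lt (by exact_mod_cast one_lt))
  have degree_left : (ascPochhammer (ZMod p) p).degree = p := by
    rw [degree_eq_natDegree (monic_ascPochhammer _ p).ne_zero, ascPochhammer_natDegree]
  have degree_right : (X ^ p - X : (ZMod p)[X]).degree = p := by
    rw [degree_eq_natDegree monic.ne_zero, FiniteField.X_pow_card_sub_X_natDegree_eq _ one_lt]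
  refine eq_of_degree_le_of_eval_finset_eq Finset.univ ?_
    (degree_left.trans degree_right.symm) ?_ ?_
  · simp [degree_left]
  · rw [(monic_ascPochhammer _ p).leadingCoeff, monic.leadingCoeff]
  · intro x _
    simp [ascPochhammer_zmod_eval_eq_zero]

theorem ascPochhammer_eq_X_pow_sub_X (K : Type*) [CommRing K] [CharP K p] :
    ascPochhammer K p = X ^ p - X := by
  rw [← ascPochhammer_map (ZMod.castHom dvd_rfl K), ascPochhammer_zmod_eq_X_pow_sub_X]
  simp

theorem mul_pow_char_of_semiconjBy (K : Type*) {R : Type*} [CommRing K] [CharP K p] [Ring R]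
    [Algebra K R] {T N : R} (h : SemiconjBy T (N + 1) N) :
    (T * N) ^ p = T ^ p * (N ^ p - N) := by
  rw [mul_pow_eq_pow_mul_aeval_ascPochhammer (K := K) h, ascPochhammer_eq_X_pow_sub_X]
  simp only [map_sub, map_pow, aeval_X]

end PrimeCharacteristic

theorem semiconjBy_shiftOp_eulerOp :
    SemiconjBy (shiftOp k V) (eulerOp k V + 1) (eulerOp k V) := by
  ext x n
  cases n with
  | zero => simp [shiftOp, eulerOp]
  | succ n => exact (succ_nsmul (x n) n).symm

theorem commute_shiftOp_seriesOp (A : ℕ → Module.End k V) :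
    Commute (shiftOp k V) (seriesOp A) := by
  ext x n
  cases n with
  | zero => simp [shiftOp, seriesOp]
  | succ n =>
    change ∑ i ∈ Finset.range (n + 1), A i (x (n - i)) =
      ∑ i ∈ Finset.range (n + 2), A i (shiftOp k V x (n + 1 - i))
    have last_term : A (n + 1) (shiftOp k V x (n + 1 - (n + 1))) = 0 := by simp [shiftOp]
    rw [Finset.sum_range_succ _ (n + 1), last_term, add_zero]
    refine Finset.sum_congr rfl fun i hi => ?_
    rw [Nat.succ_sub (Finset.mem_range_succ_iff.mp hi)]
    rfl

theorem semiconjBy_shiftOp_connection (A : ℕ → Module.End k V) :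
    SemiconjBy (shiftOp k V) (eulerOp k V + seriesOp A + 1) (eulerOp k V + seriesOp A) := by
  rw [add_right_comm]
  exact semiconjBy_shiftOp_eulerOp.add_right (commute_shiftOp_seriesOp A)

theorem statement6_general (p : ℕ) [CharP k p] (hp : 0 < p) (A : ℕ → Module.End k V) :
    (shiftOp k V * (eulerOp k V + seriesOp A)) ^ p =
      shiftOp k V ^ p * ((eulerOp k V + seriesOp A) ^ p - (eulerOp k V + seriesOp A)) := by
  have : Fact p.Prime := ⟨(CharP.char_is_prime_or_zero k p).resolve_right hp.ne'⟩
  exact mul_pow_char_of_semiconjBy p k (semiconjBy_shiftOp_connection A)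

/-- Lemma B.1, equation (B.5), of the paper. Let `k` be a field of
characteristic `p > 0`, `V` a finite-dimensional `k`-vector space, and
`A = ∑ Aᵢ tⁱ ∈ (End_k V)[[t]]`. Let `∇ = t·d/dt + A` be the connection along `t·d/dt` on
`V[[t]]` (modelled as `ℕ → V`), and `∇' = t·∇` the connection along `t²·d/dt`. Then
`(∇')^p = t^p·(∇^p − ∇)`, expressing the Frobenius-linearity of the `p`-curvature. -/
theorem statement6 [FiniteDimensional k V] (p : ℕ) [CharP k p] (hp : 0 < p)
    (A : ℕ → Module.End k V) :
    ((shiftOp k V) * (eulerOp k V + seriesOp A)) ^ p =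
      (shiftOp k V) ^ p *
        ((eulerOp k V + seriesOp A) ^ p - (eulerOp k V + seriesOp A)) :=
  statement6_general p hp A

end
end

section
/- Let R be an integral domain finitely generated as a ℤ-algebra whose fraction field has characteristic 0, and let M be a free module of rank n over the Laurent series ring R((t)) equipped with a connection ∇: M → M (an additive map with ∇(f·m) = (df/dt)·m + f·∇(m) for f ∈ R((t))). Then there exists a nonzero element h ∈ R such that the base-changed connection M ⊗_{R((t))} R[1/h]((t)) contains a cyclic vector: an element v such that v, ∇v, ∇^2 v, …, ∇^{n−1}v form a basis of M ⊗_{R((t))} R[1/h]((t)) over R[1/h]((t)). -/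
/-- Formal derivative `d/dt` on formal Laurent series. -/
noncomputable def lsDeriv {R : Type*} [CommRing R] (f : LaurentSeries R) : LaurentSeries R where
  coeff n := (n + 1) • f.coeff (n + 1)
  isPWO_support' := by
    refine Set.IsPWO.mono (f.isPWO_support.image_of_monotone
      (f := fun m : ℤ => m - 1) fun a b hab => sub_le_sub_right hab 1) ?_
    intro n hn
    have hne : f.coeff (n + 1) ≠ 0 := by
      intro h0
      apply hn
      simp [Function.mem_support, h0]
    exact ⟨n + 1, hne, by ring⟩

/-- The connection `∇ = d/dt + G` on the free module `Fin n → R((t))`, where `G` is the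
connection matrix. -/
noncomputable def connOp {R : Type*} [CommRing R] (n : ℕ)
    (G : Matrix (Fin n) (Fin n) (LaurentSeries R)) (x : Fin n → LaurentSeries R) :
    Fin n → LaurentSeries R :=
  fun i => lsDeriv (x i) + ∑ j, G i j * x j

/-! Over a ring `B` with a derivation and an element `x` with `x′ = 1`, every connection satisfies
`∇ⁱ(xᵏ⁺ⁱ w) ≡ (k + 1) ⋯ (k + i) xᵏ w` modulo `xᵏ⁺¹`. The values of `v, ∇v, ∇²v, …` modulo `x` can
therefore be prescribed one after the other, up to a positive integer factor: adding a multiple of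
`xᵐ` to `v` alters `∇ᵐ v` modulo `x` and none of the earlier iterates. For `B = A[X]` with `X′ = 1`
this gives a vector whose determinant `P ∈ A[X]` of iterates has `P(0)` a positive integer. For
`A = R((t))`, each specialization `X = t + z` with `z ∈ ℕ` commutes with the derivations, and one of
them does not annihilate `P`. The resulting determinant is a nonzero Laurent series over `R`, which
becomes a unit as soon as its leading coefficient `h` does.
-/

open Differential

section Connection

/-- An additive endomorphism `nabla` of a module over a differential ring is a connection if it
satisfies the Leibniz rule. -/
def IsConnection (B : Type*) {M : Type*} [CommRing B] [Differential B] [AddCommGroup M] [Module B M]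
    (nabla : M →+ M) : Prop :=
  ∀ (f : B) (m : M), nabla (f • m) = f′ • m + f • nabla m

variable {B M : Type*} [CommRing B] [Differential B] [AddCommGroup M] [Module B M]
  {nabla : M →+ M} {x : B}

theorem IsConnection.exists_iterate_pow_add_smul (h : IsConnection B nabla) (hx : x′ = 1)
    (k i : ℕ) (w : M) :
    ∃ u : M, nabla^[i] (x ^ (k + i) • w) =
      (k + 1).ascFactorial i • x ^ k • w + x ^ (k + 1) • u := by
  induction i generalizing k with
  | zero => exact ⟨0, by simp⟩
  | succ i ih =>
    obtain ⟨u, hu⟩ := ih (k + 1)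
    have nabla_pow (j : ℕ) (m : M) :
        nabla (x ^ (j + 1) • m) = ((j + 1 : ℕ) : B) • x ^ j • m + x ^ (j + 1) • nabla m := by
      rw [h, Derivation.leibniz_pow, hx]
      simp [mul_smul]
    have hfact : (k + 1).ascFactorial (i + 1) = (k + 2).ascFactorial i * (k + 1) := by
      rw [Nat.ascFactorial_succ, ← Nat.succ_ascFactorial, mul_comm]
    refine ⟨(k + 2).ascFactorial i • nabla w + (k + 2) • u + x • nabla u, ?_⟩
    rw [show k + (i + 1) = k + 1 + i by ring, Function.iterate_succ_apply', hu, map_add,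
      map_nsmul, nabla_pow, nabla_pow, hfact]
    module

theorem IsConnection.exists_iterate_eq_add_smul (h : IsConnection B nabla) (hx : x′ = 1)
    (e : ℕ → M) (m : ℕ) :
    ∃ v : M, ∀ i < m, ∃ u : M, nabla^[i] v = (∏ j ∈ Finset.range m, j.factorial) • e i + x • u := by
  induction m with
  | zero => exact ⟨0, by simp⟩
  | succ m ih =>
    obtain ⟨v, hv⟩ := ih
    simp only [Finset.prod_range_succ]
    set c := ∏ j ∈ Finset.range m, j.factorial
    set w := c • e m - nabla^[m] v
    have iterate_add (i : ℕ) :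
        nabla^[i] (m.factorial • v + x ^ m • w) =
          m.factorial • nabla^[i] v + nabla^[i] (x ^ m • w) := by
      rw [iterate_map_add, iterate_map_nsmul]
    refine ⟨m.factorial • v + x ^ m • w, fun i hi => ?_⟩
    rw [iterate_add]
    rcases Nat.lt_succ_iff_lt_or_eq.mp hi with hlt | rfl
    · obtain ⟨k, rfl⟩ : ∃ k, m = k + 1 + i := ⟨m - i - 1, by lia⟩
      obtain ⟨u, hu⟩ := hv i hlt
      obtain ⟨u', hu'⟩ := h.exists_iterate_pow_add_smul hx (k + 1) i w
      refine ⟨(k + 1 + i).factorial • u + (k + 2).ascFactorial i • x ^ k • w + x ^ (k + 1) • u', ?_⟩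
      rw [hu, hu']
      module
    · obtain ⟨u, hu⟩ := h.exists_iterate_pow_add_smul hx 0 i w
      rw [zero_add, zero_add, Nat.one_ascFactorial] at hu
      exact ⟨u, by rw [hu]; module⟩

end Connection

section MatrixConnection

variable {A B ι : Type*} {n : ℕ}

/-- The matrix with columns `v, T v, …, Tⁿ⁻¹ v`; `v` is cyclic for `T` when it is invertible. -/
def krylovMatrix (T : (Fin n → A) → Fin n → A) (v : Fin n → A) : Matrix (Fin n) (Fin n) A :=
  Matrix.of fun i j => T^[j] v i

variable [CommRing A] [CommRing B]

/-- The connection `v ↦ v′ + G v` on the free module `ι → A` over a differential ring `A`. -/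
def matrixConnection [Differential A] [Fintype ι] (G : Matrix ι ι A) : (ι → A) →+ (ι → A) where
  toFun v i := (v i)′ + ∑ j, G i j * v j
  map_zero' := by ext; simp
  map_add' v w := by
    ext i
    simp only [Pi.add_apply, map_add, mul_add, Finset.sum_add_distrib]
    ring

theorem isConnection_matrixConnection [Differential A] [Fintype ι] (G : Matrix ι ι A) :
    IsConnection A (matrixConnection G) := by
  intro f v
  ext i
  simp only [matrixConnection, AddMonoidHom.coe_mk, ZeroHom.coe_mk, Pi.add_apply, Pi.smul_apply,
    smul_eq_mul, Derivation.leibniz, mul_left_comm _ f, ← Finset.mul_sum]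
  ring

theorem semiconj_matrixConnection [Differential A] [Differential B] [Fintype ι] (φ : A →+* B)
    (hφ : ∀ a, φ a′ = (φ a)′) (G : Matrix ι ι A) :
    Function.Semiconj (φ ∘ ·) (matrixConnection G) (matrixConnection (G.map φ)) := by
  intro v
  ext i
  simp [matrixConnection, hφ]

theorem map_det_krylovMatrix {T : (Fin n → A) → Fin n → A} {T' : (Fin n → B) → Fin n → B}
    (φ : A →+* B) (hφ : Function.Semiconj (φ ∘ ·) T T') (v : Fin n → A) :
    φ (krylovMatrix T v).det = (krylovMatrix T' (φ ∘ v)).det := by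
  rw [RingHom.map_det]
  congr 1
  ext i j
  exact congrFun ((hφ.iterate_right j).eq v) i

theorem exists_map_det_krylovMatrix_eq [Differential A] {x : A} (hx : x′ = 1)
    (G : Matrix (Fin n) (Fin n) A) (φ : A →+* B) (hφ : φ x = 0) :
    ∃ v, φ (krylovMatrix (matrixConnection G) v).det =
      (((∏ j ∈ Finset.range n, j.factorial) ^ n : ℕ) : B) := by
  obtain ⟨v, hv⟩ := (isConnection_matrixConnection G).exists_iterate_eq_add_smul hx
    (fun i j => if (j : ℕ) = i then 1 else 0) n
  refine ⟨v, ?_⟩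
  have hdiag : φ.mapMatrix (krylovMatrix (matrixConnection G) v) =
      Matrix.diagonal fun _ => ((∏ j ∈ Finset.range n, j.factorial : ℕ) : B) := by
    ext i j
    obtain ⟨u, hu⟩ := hv j j.2
    simp [krylovMatrix, hu, hφ, Matrix.diagonal_apply, Fin.ext_iff, apply_ite φ]
  rw [RingHom.map_det, hdiag]
  simp

end MatrixConnection

section CyclicVector

open Polynomial

theorem exists_eval_add_natCast_ne_zero {A : Type*} [CommRing A] [IsDomain A] [CharZero A]
    {P : A[X]} (hP : P ≠ 0) (s : A) : ∃ z : ℕ, P.eval (s + z) ≠ 0 := by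
  by_contra! hroot
  have hinj : Function.Injective fun z : ℕ => s + (z : A) :=
    (add_right_injective s).comp Nat.cast_injective
  exact hP (eq_zero_of_infinite_isRoot P
    ((Set.infinite_range_of_injective hinj).mono (Set.range_subset_iff.mpr hroot)))

theorem exists_det_krylovMatrix_ne_zero {A : Type*} [CommRing A] [IsDomain A] [CharZero A]
    [Differential A] {s : A} (hs : s′ = 1) {n : ℕ} (G : Matrix (Fin n) (Fin n) A) :
    ∃ v, (krylovMatrix (matrixConnection G) v).det ≠ 0 := by
  let : Differential A[X] := ⟨implicitDeriv 1⟩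
  have hX : (X : A[X])′ = 1 := implicitDeriv_X 1
  obtain ⟨v, hv⟩ := exists_map_det_krylovMatrix_eq hX (G.map C) (evalRingHom 0) eval_X
  set P := (krylovMatrix (matrixConnection (G.map C)) v).det
  have hP : P ≠ 0 := by
    intro hzero
    rw [hzero, map_zero, eq_comm, Nat.cast_eq_zero] at hv
    exact pow_ne_zero n (Finset.prod_ne_zero_iff.mpr fun j _ => j.factorial_ne_zero) hv
  obtain ⟨z, hz⟩ := exists_eval_add_natCast_ne_zero hP s
  have heval (p : A[X]) : evalRingHom (s + (z : A)) p′ = (evalRingHom (s + (z : A)) p)′ :=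
    (deriv_aeval_eq_implicitDeriv (s + (z : A)) 1 (by simp [hs]) p).symm
  have hG : (G.map C).map (evalRingHom (s + (z : A))) = G := by ext; simp
  refine ⟨evalRingHom (s + (z : A)) ∘ v, ?_⟩
  rw [← hG, ← map_det_krylovMatrix _ (semiconj_matrixConnection _ heval _)]
  exact hz

end CyclicVector

section HahnSeries

open HahnSeries

theorem leadingCoeff_map_of_ne_zero {Γ R S F : Type*} [LinearOrder Γ] [Zero Γ] [Zero R] [Zero S]
    [FunLike F R S] [ZeroHomClass F R S] {φ : F} {f : HahnSeries Γ R}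
    (h : φ f.leadingCoeff ≠ 0) : (f.map φ).leadingCoeff = φ f.leadingCoeff := by
  rw [leadingCoeff_eq] at h
  have hne : f.map φ ≠ 0 := ne_zero_of_coeff_ne_zero h
  have horder : (f.map φ).order = f.order := by
    refine le_antisymm (order_le_of_coeff_ne_zero h) (order_le_of_coeff_ne_zero fun hzero => ?_)
    apply leadingCoeff_ne_zero.mpr hne
    rw [leadingCoeff_eq, map_coeff, hzero, map_zero]
  rw [leadingCoeff_eq, leadingCoeff_eq, horder, map_coeff]

theorem isUnit_map_of_isUnit_map_leadingCoeff {Γ R S F : Type*} [AddCommGroup Γ] [LinearOrder Γ]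
    [IsOrderedAddMonoid Γ] [Zero R] [CommRing S] [FunLike F R S] [ZeroHomClass F R S] {φ : F}
    {f : HahnSeries Γ R} (h : IsUnit (φ f.leadingCoeff)) : IsUnit (f.map φ) := by
  nontriviality S
  refine isUnit_of_isUnit_leadingCoeff_AddUnitOrder ?_ (AddGroup.isAddUnit _)
  rwa [leadingCoeff_map_of_ne_zero h.ne_zero]

variable {Γ R S : Type*} [AddCommMonoid Γ] [PartialOrder Γ]

/-- Multiplication of the coefficients by an additive weight `w : Γ →+ R`. For `Γ = ℤ` and `w` the
cast, this is the Euler operator `t d/dt` on Laurent series. -/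
def eulerOperator [CommSemiring R] (w : Γ →+ R) : HahnSeries Γ R →+ HahnSeries Γ R where
  toFun f :=
    ⟨fun γ => w γ * f.coeff γ, f.isPWO_support.mono (Function.support_mul_subset_right _ _)⟩
  map_zero' := by ext; simp
  map_add' f g := by ext; simp [mul_add]

theorem coeff_eulerOperator [CommSemiring R] (w : Γ →+ R) (f : HahnSeries Γ R) (γ : Γ) :
    (eulerOperator w f).coeff γ = w γ * f.coeff γ :=
  rfl

variable [IsOrderedCancelAddMonoid Γ]

theorem eulerOperator_mul [CommSemiring R] (w : Γ →+ R) (f g : HahnSeries Γ R) :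
    eulerOperator w (f * g) = f * eulerOperator w g + g * eulerOperator w f := by
  have hsupp (f : HahnSeries Γ R) : (eulerOperator w f).support ⊆ f.support :=
    Function.support_mul_subset_right _ _
  ext γ
  rw [mul_comm g, coeff_add, coeff_mul_right' g.isPWO_support (hsupp g),
    coeff_mul_left' f.isPWO_support (hsupp f), ← Finset.sum_add_distrib, coeff_eulerOperator,
    coeff_mul, Finset.mul_sum]
  refine Finset.sum_congr rfl fun ij hij => ?_
  rw [← (Finset.mem_antidiagonal.mp hij).2.2, map_add, coeff_eulerOperator, coeff_eulerOperator]
  ring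

/-- `HahnSeries.map` along a ring homomorphism, as a ring homomorphism; it is the base change of
Laurent series along `R → S`. -/
def hahnSeriesMapRingHom [NonAssocSemiring R] [NonAssocSemiring S] (φ : R →+* S) :
    HahnSeries Γ R →+* HahnSeries Γ S where
  toFun f := f.map φ
  map_one' := by
    ext
    simp only [map_coeff, coeff_one]
    split_ifs <;> simp
  map_zero' := by ext; simp
  map_add' f g := by ext; simp
  map_mul' f g := HahnSeries.map_mul (φ : R →ₙ+* S)

end HahnSeries

section LaurentSeries

/-- The differential ring given by an additive map satisfying the Leibniz rule. Building it over an
arbitrary `A` selects the `ℤ`-algebra structure that `Differential` refers to; for Laurent series,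
instance search would find a different one. -/
abbrev differentialOfLeibniz {A : Type*} [CommRing A] (D : A →+ A)
    (hD : ∀ f g, D (f * g) = f * D g + g * D f) : Differential A where
  deriv := .mk' D.toIntLinearMap hD

variable {R S : Type*} [CommRing R] [CommRing S]

theorem lsDeriv_eq_single_mul_eulerOperator (f : LaurentSeries R) :
    lsDeriv f = HahnSeries.single (-1) 1 * eulerOperator (Int.castAddHom R) f := by
  ext m
  simp [lsDeriv, coeff_eulerOperator, HahnSeries.coeff_single_mul]

/-- Laurent series form a differential ring under `d/dt`. -/
noncomputable instance instDifferentialLaurentSeries : Differential (LaurentSeries R) :=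
  differentialOfLeibniz
    (AddMonoidHom.mk' lsDeriv fun f g => by
      simp only [lsDeriv_eq_single_mul_eulerOperator, map_add, mul_add])
    fun f g => by
      simp only [AddMonoidHom.mk'_apply, lsDeriv_eq_single_mul_eulerOperator, eulerOperator_mul]
      ring

theorem deriv_eq_lsDeriv (f : LaurentSeries R) : f′ = lsDeriv f :=
  rfl

theorem deriv_single_one_one : (HahnSeries.single 1 1 : LaurentSeries R)′ = 1 := by
  ext m
  rw [deriv_eq_lsDeriv]
  by_cases hm : m = 0 <;> simp [lsDeriv, HahnSeries.coeff_single, HahnSeries.coeff_one, hm]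

theorem hahnSeriesMapRingHom_deriv (φ : R →+* S) (f : LaurentSeries R) :
    hahnSeriesMapRingHom φ f′ = (hahnSeriesMapRingHom φ f)′ := by
  ext m
  exact map_zsmul φ _ _

theorem connOp_eq_matrixConnection {n : ℕ} (G : Matrix (Fin n) (Fin n) (LaurentSeries R)) :
    connOp n G = matrixConnection G :=
  rfl

end LaurentSeries

theorem statement9_general {R : Type*} [CommRing R] [IsDomain R] [CharZero R]
    (n : ℕ) (G : Matrix (Fin n) (Fin n) (LaurentSeries R)) :
    ∃ h : R, h ≠ 0 ∧
      ∃ v : Fin n → LaurentSeries R,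
        IsUnit (Matrix.of fun i j : Fin n =>
          ((connOp n (G.map fun g => g.map (algebraMap R (Localization.Away h))))^[(j : ℕ)]
            fun l => (v l).map (algebraMap R (Localization.Away h))) i) := by
  have : CharZero (LaurentSeries R) := charZero_of_injective_ringHom HahnSeries.C_injective
  obtain ⟨v, hv⟩ := exists_det_krylovMatrix_ne_zero deriv_single_one_one G
  set d := (krylovMatrix (matrixConnection G) v).det
  refine ⟨d.leadingCoeff, HahnSeries.leadingCoeff_ne_zero.mpr hv, v, ?_⟩
  set φ := algebraMap R (Localization.Away d.leadingCoeff)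
  have hunit : IsUnit (hahnSeriesMapRingHom φ d) :=
    isUnit_map_of_isUnit_map_leadingCoeff (IsLocalization.Away.algebraMap_isUnit d.leadingCoeff)
  have hsemiconj := semiconj_matrixConnection _ (hahnSeriesMapRingHom_deriv φ) G
  rw [map_det_krylovMatrix _ hsemiconj] at hunit
  rw [connOp_eq_matrixConnection]
  exact (Matrix.isUnit_iff_isUnit_det _).mpr hunit

/-- Lemma A.2 of the paper. Let `R` be an integral domain, finitely generated
as a `ℤ`-algebra, with fraction field of characteristic `0`, and let `M = Fin n → R((t))` be a
free `R((t))`-module of rank `n` with connection `∇ = d/dt + G`. Then there is a nonzero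
`h ∈ R` such that the base change of `(M, ∇)` to `R[1/h]((t))` contains a cyclic vector `v`,
i.e. `v, ∇v, …, ∇^{n-1}v` form a basis (equivalently the matrix with these columns is
invertible). -/
theorem statement9 {R : Type*} [CommRing R] [IsDomain R] [Algebra.FiniteType ℤ R]
    [CharZero (FractionRing R)]
    (n : ℕ) (G : Matrix (Fin n) (Fin n) (LaurentSeries R)) :
    ∃ h : R, h ≠ 0 ∧
      ∃ v : Fin n → LaurentSeries (Localization.Away h),
        IsUnit (Matrix.of fun i j : Fin n =>
          ((connOp n (G.map fun g =>
            g.map (algebraMap R (Localization.Away h))))^[(j : ℕ)] v) i) := by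
  have : CharZero R := (algebraMap R (FractionRing R)).charZero
  obtain ⟨h, hh, v, hv⟩ := statement9_general n G
  exact ⟨h, hh, _, hv⟩
end

section
/- Let R₀ be an integral domain finitely generated as a ℤ-algebra whose fraction field K has characteristic 0, let V be a finite rank free R₀-module, and let A ∈ End_{R₀}(V). Then there exist an integral domain R finitely generated as a ℤ-algebra, together with an injective ring homomorphism R₀ → R whose induced extension of fraction fields is algebraic, such that over R: (1) the characteristic polynomial of A ⊗ R splits completely as ∏_{i=1}^m (x − λ_i)^{k_i} with pairwise distinct λ_i ∈ R; (2) V ⊗_{R₀} R decomposes as the direct sum ⊕_{i=1}^m ker((A ⊗ R) − λ_i·id)^{k_i}, and each summand is a finite rank free R-module; and (3) λ_i − λ_j is a unit of R for all i ≠ j. -/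
universe u

/-!
Over an algebraic closure `L` of the fraction field of `R₀`, the endomorphism `A` has a Jordan
decomposition, and `L ⊗ V` has a basis `c` adapted to it. Let `R` be generated over `R₀` by the
eigenvalues, the inverses of their differences, and the entries of the two transition matrices
between `c` and an `R₀`-basis of `V`. The differences being units, the factors `(X - μ i) ^ k i` are
pairwise coprime in `R[X]`, so the generalized eigenspaces already decompose `R ⊗ V`. Inside `L ⊗ V`
the lattice `R ⊗ V` is the `R`-span of `c`, so `c` is an `R`-basis of `R ⊗ V` adapted to this
decomposition, and each summand is free.
-/

section

open Polynomial Module TensorProduct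

section CoprimeKernels

variable {R M ι : Type*} [CommRing R] [AddCommGroup M] [Module R M] (f : End R M)

theorem biSup_ker_aeval_eq_ker_aeval_prod {q : ι → R[X]} {s : Finset ι}
    (hq : (s : Set ι).Pairwise fun i j => IsCoprime (q i) (q j)) :
    ⨆ i ∈ s, LinearMap.ker (aeval f (q i)) = LinearMap.ker (aeval f (∏ i ∈ s, q i)) := by
  classical
  induction s using Finset.induction_on with
  | empty => simp [Module.End.one_eq_id]
  | insert i s hi ih =>
    have hcop : IsCoprime (q i) (∏ j ∈ s, q j) := .prod_right fun j hj =>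
      hq (Finset.mem_insert_self i s) (Finset.mem_insert_of_mem hj) fun h => hi (h ▸ hj)
    rw [Finset.iSup_insert, ih (hq.mono (by simp)), Finset.prod_insert hi,
      sup_ker_aeval_eq_ker_aeval_mul_of_coprime f hcop]

variable [Fintype ι] [DecidableEq ι]

theorem isInternal_ker_aeval {q : ι → R[X]} (hq : Pairwise fun i j => IsCoprime (q i) (q j))
    (hf : aeval f (∏ i, q i) = 0) :
    DirectSum.IsInternal fun i => LinearMap.ker (aeval f (q i)) := by
  refine DirectSum.isInternal_submodule_of_iSupIndep_of_iSup_eq_top (fun i => ?_) ?_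
  · have hcop : IsCoprime (q i) (∏ j ∈ Finset.univ.erase i, q j) :=
      .prod_right fun j hj => hq (Finset.ne_of_mem_erase hj).symm
    have hker := biSup_ker_aeval_eq_ker_aeval_prod f (s := Finset.univ.erase i) (hq.set_pairwise _)
    simp only [Finset.mem_erase, Finset.mem_univ, and_true] at hker
    exact hker ▸ disjoint_ker_aeval_of_isCoprime f hcop
  · simpa [hf] using biSup_ker_aeval_eq_ker_aeval_prod f (s := Finset.univ) (hq.set_pairwise _)

theorem isInternal_ker_sub_smul_pow {μ : ι → R} {k : ι → ℕ}
    (hμ : Pairwise fun i j => IsUnit (μ i - μ j))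
    (hf : aeval f (∏ i, (X - C (μ i)) ^ k i) = 0) :
    DirectSum.IsInternal fun i => LinearMap.ker ((f - μ i • (1 : End R M)) ^ k i) := by
  have hcop : Pairwise fun i j => IsCoprime ((X - C (μ i)) ^ k i) ((X - C (μ j)) ^ k j) :=
    fun i j hij => (isCoprime_X_sub_C_of_isUnit_sub (hμ hij)).pow
  simpa [Algebra.algebraMap_eq_smul_one] using isInternal_ker_aeval f hcop hf

end CoprimeKernels

section AdaptedBasis

variable {R M ι : Type*} {κ : ι → Type*} [Ring R] [AddCommGroup M] [Module R M]
  {N : ι → Submodule R M}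

theorem span_range_basis_eq_of_iSupIndep (hN : iSupIndep N) (c : Basis (Σ i, κ i) R M)
    (hc : ∀ s, c s ∈ N s.1) (i : ι) : Submodule.span R (Set.range fun j => c ⟨i, j⟩) = N i := by
  let P (i : ι) : Submodule R M := Submodule.span R (Set.range fun j => c ⟨i, j⟩)
  have hPN : P ≤ N := fun i => Submodule.span_le.2 (Set.range_subset_iff.2 fun j => hc ⟨i, j⟩)
  have hP : ⨆ i, P i = ⊤ := by
    rw [← Submodule.span_iUnion, ← Set.range_sigma_eq_iUnion_range, c.span_eq]
  exact congrFun ((hN.le_iff_eq_of_iSup_eq_top hP).1 hPN) i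

/-- The part indexed by `i` of a basis adapted to an independent family of submodules, as a basis of
the `i`-th member of the family. -/
noncomputable def basisOfISupIndep (hN : iSupIndep N) (c : Basis (Σ i, κ i) R M)
    (hc : ∀ s, c s ∈ N s.1) (i : ι) : Basis (κ i) R (N i) :=
  (Basis.span (c.linearIndependent.comp (Sigma.mk i) sigma_mk_injective)).map
    (LinearEquiv.ofEq _ _ (span_range_basis_eq_of_iSupIndep hN c hc i))

theorem exists_basis_mem_of_isInternal {K U : Type*} [DivisionRing K] [AddCommGroup U] [Module K U]
    [Module.Finite K U] [DecidableEq ι] {N : ι → Submodule K U} (hN : DirectSum.IsInternal N) :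
    ∃ (n : ι → ℕ) (c : Basis (Σ i, Fin (n i)) K U), ∀ s, c s ∈ N s.1 :=
  ⟨_, hN.collectedBasis fun i => Module.finBasis K (N i), hN.collectedBasis_mem _⟩

end AdaptedBasis

section Lattices

variable {S L U ι σ : Type*} [CommRing S] [Ring L] [Nontrivial L] [Algebra S L]
  [IsDomain S] [IsTorsionFree S L]
  [AddCommGroup U] [Module S U] [Module L U] [IsScalarTower S L U]

theorem span_range_basis_eq_span_range_basis (c : Basis σ L U) (d : Basis ι L U)
    (hcd : ∀ s i, d.repr (c s) i ∈ Set.range (algebraMap S L))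
    (hdc : ∀ i s, c.repr (d i) s ∈ Set.range (algebraMap S L)) :
    Submodule.span S (Set.range c) = Submodule.span S (Set.range d) := by
  refine le_antisymm ?_ ?_ <;> rw [Submodule.span_le, Set.range_subset_iff]
  · exact fun s => (d.mem_span_iff_repr_mem S _).2 (hcd s)
  · exact fun i => (c.mem_span_iff_repr_mem S _).2 (hdc i)

theorem exists_basis_map_eq_of_range_eq_span {W : Type*} [AddCommGroup W] [Module S W]
    {g : W →ₗ[S] U} (hg : Function.Injective g) (c : Basis σ L U)
    (hrange : LinearMap.range g = Submodule.span S (Set.range c)) :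
    ∃ c' : Basis σ S W, ∀ s, g (c' s) = c s := by
  let e : W ≃ₗ[S] Submodule.span S (Set.range c) :=
    (LinearEquiv.ofInjective g hg).trans (LinearEquiv.ofEq _ _ hrange)
  have he (x : W) : (e x : U) = g x := rfl
  exact ⟨(c.restrictScalars S).map e.symm, fun s => by simp [← he]⟩

end Lattices

theorem exists_eq_prod_X_sub_C_pow_of_splits {R : Type*} [CommRing R] [IsDomain R] {p : R[X]}
    (hs : p.Splits) (hp : p.Monic) :
    ∃ (m : ℕ) (μ : Fin m → R) (k : Fin m → ℕ), Function.Injective μ ∧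
      p = ∏ i, (X - C (μ i)) ^ k i := by
  classical
  let e := p.roots.toFinset.equivFin.symm
  refine ⟨_, fun i => (e i : R), fun i => p.rootMultiplicity (e i : R),
    Subtype.val_injective.comp e.injective, ?_⟩
  calc p = (p.roots.map fun a => X - C a).prod := hs.eq_prod_roots_of_monic hp
    _ = ∏ a : p.roots.toFinset, (X - C (a : R)) ^ p.rootMultiplicity (a : R) := by
      rw [prod_multiset_root_eq_finset_root, ← Finset.prod_coe_sort]
    _ = _ := (e.prod_comp fun a => (X - C (a : R)) ^ p.rootMultiplicity (a : R)).symm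

/-- The endomorphism `f` has a Jordan decomposition over `R` with distinct eigenvalues `μ i` of
algebraic multiplicities `k i`; the generalized eigenspaces are written out as kernels. -/
structure IsJordanDecomposition {R M ι : Type*} [CommRing R] [AddCommGroup M] [Module R M]
    [Module.Free R M] [Module.Finite R M] [Fintype ι] [DecidableEq ι] (f : End R M) (μ : ι → R)
    (k : ι → ℕ) : Prop where
  injective : Function.Injective μ
  charpoly_eq : f.charpoly = ∏ i, (X - C (μ i)) ^ k i
  isInternal : DirectSum.IsInternal fun i => LinearMap.ker ((f - μ i • (1 : End R M)) ^ k i)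
  free (i : ι) : Module.Free R (LinearMap.ker ((f - μ i • (1 : End R M)) ^ k i))
  finite (i : ι) : Module.Finite R (LinearMap.ker ((f - μ i • (1 : End R M)) ^ k i))

section BaseChange

variable {R₀ S L V : Type*} [CommRing R₀] [CommRing S] [CommRing L] [Algebra R₀ S] [Algebra R₀ L]
  [Algebra S L] [IsScalarTower R₀ S L] [AddCommGroup V] [Module R₀ V]

variable (R₀ S L V) in
/-- The comparison map `S ⊗ V → L ⊗ V` induced by `S → L`. -/
noncomputable def baseChangeMap : S ⊗[R₀] V →ₗ[S] L ⊗[R₀] V :=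
  AlgebraTensorModule.rTensor R₀ V (Algebra.linearMap S L)

@[simp]
theorem baseChangeMap_tmul (r : S) (v : V) :
    baseChangeMap R₀ S L V (r ⊗ₜ v) = algebraMap S L r ⊗ₜ v :=
  rfl

theorem baseChangeMap_injective [Module.Flat R₀ V] (h : Function.Injective (algebraMap S L)) :
    Function.Injective (baseChangeMap R₀ S L V) :=
  Module.Flat.rTensor_preserves_injective_linearMap
    ((Algebra.linearMap S L).restrictScalars R₀) h

theorem range_baseChangeMap {ι : Type*} (b : Basis ι R₀ V) :
    LinearMap.range (baseChangeMap R₀ S L V) = Submodule.span S (Set.range (b.baseChange L)) := by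
  rw [LinearMap.range_eq_map, ← (b.baseChange S).span_eq, Submodule.map_span, ← Set.range_comp]
  congr 2
  ext i
  simp

theorem baseChangeMap_baseChange (A : End R₀ V) (x : S ⊗[R₀] V) :
    baseChangeMap R₀ S L V (A.baseChange S x) = A.baseChange L (baseChangeMap R₀ S L V x) := by
  induction x with
  | zero => simp only [map_zero]
  | add x y hx hy => simp only [map_add, hx, hy]
  | tmul r v => simp only [LinearMap.baseChange_tmul, baseChangeMap_tmul]

theorem baseChangeMap_sub_smul_pow (A : End R₀ V) (a : S) (n : ℕ) (x : S ⊗[R₀] V) :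
    baseChangeMap R₀ S L V (((A.baseChange S - a • (1 : End S (S ⊗[R₀] V))) ^ n) x) =
      ((A.baseChange L - algebraMap S L a • (1 : End L (L ⊗[R₀] V))) ^ n)
        (baseChangeMap R₀ S L V x) := by
  have hsemi : Function.Semiconj (baseChangeMap R₀ S L V)
      (A.baseChange S - a • (1 : End S (S ⊗[R₀] V)))
      (A.baseChange L - algebraMap S L a • (1 : End L (L ⊗[R₀] V))) := fun y => by
    simp [baseChangeMap_baseChange]
  rw [Module.End.coe_pow, Module.End.coe_pow]
  exact hsemi.iterate_right n x

theorem isJordanDecomposition_baseChange [IsDomain S] [Nontrivial L] [IsTorsionFree S L]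
    [Module.Free R₀ V] [Module.Finite R₀ V] {A : End R₀ V} {ι ν : Type*}
    {κ : ι → Type*} [Fintype ι] [DecidableEq ι] [∀ i, Finite (κ i)] {μ : ι → S} {k : ι → ℕ}
    (hμ : Pairwise fun i j => IsUnit (μ i - μ j))
    (hA : (A.baseChange L).charpoly = ∏ i, (X - C (algebraMap S L (μ i))) ^ k i)
    (b : Basis ν R₀ V) (c : Basis (Σ i, κ i) L (L ⊗[R₀] V))
    (hc : ∀ s, c s ∈ LinearMap.ker
      ((A.baseChange L - algebraMap S L (μ s.1) • (1 : End L (L ⊗[R₀] V))) ^ k s.1))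
    (hcb : ∀ s i, (b.baseChange L).repr (c s) i ∈ Set.range (algebraMap S L))
    (hbc : ∀ i s, c.repr (b.baseChange L i) s ∈ Set.range (algebraMap S L)) :
    IsJordanDecomposition (A.baseChange S) μ k := by
  have hSL : Function.Injective (algebraMap S L) := FaithfulSMul.algebraMap_injective S L
  have hg : Function.Injective (baseChangeMap R₀ S L V) := baseChangeMap_injective hSL
  have hcharpoly : (A.baseChange S).charpoly = ∏ i, (X - C (μ i)) ^ k i := by
    apply Polynomial.map_injective _ hSL
    rw [LinearMap.charpoly_baseChange] at hA ⊢
    rw [Polynomial.map_map, ← IsScalarTower.algebraMap_eq, hA]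
    simp [Polynomial.map_prod]
  have hint := isInternal_ker_sub_smul_pow (A.baseChange S) hμ
    (hcharpoly ▸ LinearMap.aeval_self_charpoly _)
  obtain ⟨c', hc'⟩ := exists_basis_map_eq_of_range_eq_span hg c
    ((range_baseChangeMap b).trans (span_range_basis_eq_span_range_basis c _ hcb hbc).symm)
  have hc'_mem (s) : c' s ∈ LinearMap.ker
      ((A.baseChange S - μ s.1 • (1 : End S (S ⊗[R₀] V))) ^ k s.1) := by
    rw [LinearMap.mem_ker]
    apply hg
    rw [baseChangeMap_sub_smul_pow, hc', map_zero]
    exact hc s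
  let eigenbasis := basisOfISupIndep hint.submodule_iSupIndep c' hc'_mem
  exact {
    injective := fun i j h => by_contra fun hij => (hμ hij).ne_zero (sub_eq_zero.2 h)
    charpoly_eq := hcharpoly
    isInternal := hint
    free := fun i => .of_basis (eigenbasis i)
    finite := fun i => .of_basis (eigenbasis i) }

end BaseChange

theorem exists_fg_subalgebra_isJordanDecomposition {R₀ L V : Type*} [CommRing R₀] [Field L]
    [Algebra R₀ L] [AddCommGroup V] [Module R₀ V] [Module.Free R₀ V] [Module.Finite R₀ V]
    (A : End R₀ V) (hA : (A.baseChange L).charpoly.Splits) :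
    ∃ S : Subalgebra R₀ L, S.FG ∧ ∃ (m : ℕ) (μ : Fin m → S) (k : Fin m → ℕ),
      IsJordanDecomposition (A.baseChange S) μ k ∧ Pairwise fun i j => IsUnit (μ i - μ j) := by
  obtain ⟨m, μ, k, hμ, hcharpoly⟩ :=
    exists_eq_prod_X_sub_C_pow_of_splits hA (LinearMap.charpoly_monic _)
  have hint := isInternal_ker_sub_smul_pow (A.baseChange L)
    (fun i j hij => (sub_ne_zero.2 (hμ.ne hij)).isUnit)
    (hcharpoly ▸ LinearMap.aeval_self_charpoly _)
  obtain ⟨n, c, hc⟩ := exists_basis_mem_of_isInternal hint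
  let b := Module.Free.chooseBasis R₀ V
  let T : Set L := Set.range μ ∪ Set.range (fun p : _ × _ => (μ p.1 - μ p.2)⁻¹) ∪
    (Set.range (fun p : _ × _ => (b.baseChange L).repr (c p.1) p.2) ∪
      Set.range (fun p : _ × _ => c.repr (b.baseChange L p.1) p.2))
  have hT : T.Finite := ((Set.finite_range _).union (Set.finite_range _)).union
    ((Set.finite_range _).union (Set.finite_range _))
  let S := Algebra.adjoin R₀ T
  have hTS : T ⊆ S := Algebra.subset_adjoin
  let μS (i : Fin m) : S := ⟨μ i, hTS (.inl (.inl ⟨i, rfl⟩))⟩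
  have hunit : Pairwise fun i j => IsUnit (μS i - μS j) := fun i j hij =>
    .of_mul_eq_one ⟨_, hTS (.inl (.inr ⟨(i, j), rfl⟩))⟩
      (Subtype.ext (mul_inv_cancel₀ (sub_ne_zero.2 (hμ.ne hij))))
  refine ⟨S, Subalgebra.fg_def.2 ⟨T, hT, rfl⟩, m, μS, k, ?_, hunit⟩
  exact isJordanDecomposition_baseChange hunit hcharpoly b c hc
    (fun s i => ⟨⟨_, hTS (.inr (.inl ⟨(s, i), rfl⟩))⟩, rfl⟩)
    (fun i s => ⟨⟨_, hTS (.inr (.inr ⟨(i, s), rfl⟩))⟩, rfl⟩)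

theorem statement11_general {R₀ : Type u} [CommRing R₀] [IsDomain R₀]
    {V : Type*} [AddCommGroup V] [Module R₀ V] [Module.Free R₀ V] [Module.Finite R₀ V]
    (A : End R₀ V) :
    ∃ (R : Type u) (_ : CommRing R) (_ : IsDomain R) (_ : Algebra R₀ R),
      Function.Injective (algebraMap R₀ R) ∧ Algebra.FiniteType R₀ R ∧ Algebra.IsAlgebraic R₀ R ∧
      ∃ (m : ℕ) (μ : Fin m → R) (k : Fin m → ℕ),
        IsJordanDecomposition (A.baseChange R) μ k ∧ Pairwise fun i j => IsUnit (μ i - μ j) := by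
  let L := AlgebraicClosure (FractionRing R₀)
  have hL : Algebra.IsAlgebraic R₀ L :=
    (IsFractionRing.comap_isAlgebraic_iff (K := FractionRing R₀)).2 inferInstance
  have : FaithfulSMul R₀ L := .trans R₀ (FractionRing R₀) L
  obtain ⟨R, hfg, hjordan⟩ := exists_fg_subalgebra_isJordanDecomposition (L := L) A
    (IsAlgClosed.splits _)
  exact ⟨R, inferInstance, inferInstance, inferInstance,
    .of_comp (f := algebraMap R L) (FaithfulSMul.algebraMap_injective R₀ L),
    (Subalgebra.fg_iff_finiteType R).1 hfg, .of_injective R.val Subtype.val_injective, hjordan⟩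

end

/-- beginning of Section 4 of the paper. Let `R₀` be an integral domain,
finitely generated as a `ℤ`-algebra, whose fraction field has characteristic `0`, `V` a finite
rank free `R₀`-module and `A ∈ End_{R₀}(V)`. Then there is an integral domain `R`, finitely
generated as a `ℤ`-algebra, and an injective ring homomorphism `R₀ → R` which is an algebraic
extension (so the induced extension of fraction fields is algebraic), such that over `R` the
endomorphism `A ⊗ R` admits a Jordan decomposition: its characteristic polynomial splits
completely as `∏ (x − λᵢ)^{kᵢ}` with pairwise distinct `λᵢ ∈ R`, the base change `V ⊗ R` is the
internal direct sum of the generalized eigenspaces `ker (A ⊗ R − λᵢ)^{kᵢ}`, each a finite rank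
free `R`-module, and `λᵢ − λⱼ` is a unit for `i ≠ j`. -/
theorem statement11 {R₀ : Type u} [CommRing R₀] [IsDomain R₀] [Algebra.FiniteType ℤ R₀]
    [CharZero (FractionRing R₀)]
    (V : Type u) [AddCommGroup V] [Module R₀ V] [Module.Free R₀ V] [Module.Finite R₀ V]
    (A : Module.End R₀ V) :
    ∃ (R : Type u) (_ : CommRing R) (_ : IsDomain R) (f : R₀ →+* R),
      Function.Injective f ∧
      Algebra.FiniteType ℤ R ∧
      (∀ x : R, ∃ q : Polynomial R₀, q ≠ 0 ∧ Polynomial.eval₂ f x q = 0) ∧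
      (letI : Algebra R₀ R := f.toAlgebra
       ∃ (m : ℕ) (lam : Fin m → R) (k : Fin m → ℕ),
         Function.Injective lam ∧
         LinearMap.charpoly (LinearMap.baseChange R A) =
           ∏ i : Fin m, (Polynomial.X - Polynomial.C (lam i)) ^ k i ∧
         DirectSum.IsInternal (fun i : Fin m =>
           LinearMap.ker ((LinearMap.baseChange R A -
             lam i • (1 : Module.End R (TensorProduct R₀ R V))) ^ k i)) ∧
         (∀ i : Fin m, Module.Free R
           (LinearMap.ker ((LinearMap.baseChange R A -
             lam i • (1 : Module.End R (TensorProduct R₀ R V))) ^ k i))) ∧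
         (∀ i : Fin m, Module.Finite R
           (LinearMap.ker ((LinearMap.baseChange R A -
             lam i • (1 : Module.End R (TensorProduct R₀ R V))) ^ k i))) ∧
         (∀ i j : Fin m, i ≠ j → IsUnit (lam i - lam j))) := by
  obtain ⟨R, _, _, _, hinj, hft, halg, m, μ, k, hJ, hμ⟩ := statement11_general A
  exact ⟨R, _, ‹_›, algebraMap R₀ R, hinj, .trans ‹_› hft, halg.isAlgebraic, by
    rw [toAlgebra_algebraMap]
    exact ⟨m, μ, k, hJ.injective, hJ.charpoly_eq, hJ.isInternal, hJ.free, hJ.finite, hμ⟩⟩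
end
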